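/- arXiv:1506.08927 — 3 statements merged into one kernel-verified Lean document; each statement's English description precedes it below -/
import Mathlib

section
/- Let U = X_{i,j} and V = X_{k,ℓ} be distinct indecomposable representations of Q_ε. Then both (U,V) and (V,U) are exceptional pairs if and only if {i,j} ∩ {k,ℓ} = ∅ and the chords {i,j} and {k,ℓ} do not cross. -/
namespace ESPaper

/-- Source of arrow `a m` (between vertices `m` and `m+1`): `m` if `ε m = +` (true). -/
def asrc (ε : ℕ → Bool) (m : ℕ) : ℕ := if ε m then m else m + 1

/-- Target of arrow `a m`. -/
def atgt (ε : ℕ → Bool) (m : ℕ) : ℕ := if ε m then m + 1 else m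

/-- A representation of the type `A_n` quiver `Q_ε`: finite dimensional vector spaces at the
vertices `1, …, n` (the spaces at the remaining indices are required to be trivial, so that
the maps attached to indices outside `1, …, n-1` carry no information) together with a
linear map along each arrow `a m : asrc ε m → atgt ε m`, `1 ≤ m ≤ n-1`. -/
structure Rep (K : Type) [Field K] (n : ℕ) (ε : ℕ → Bool) : Type 1 where
  V : ℕ → Type
  [instAdd : ∀ m, AddCommGroup (V m)]
  [instMod : ∀ m, Module K (V m)]
  [instFin : ∀ m, FiniteDimensional K (V m)]
  triv : ∀ m, m = 0 ∨ n < m → Subsingleton (V m)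
  φ : ∀ m, V (asrc ε m) →ₗ[K] V (atgt ε m)

attribute [instance] Rep.instAdd Rep.instMod Rep.instFin

/-- A morphism of representations of `Q_ε`. -/
structure RepHom {K : Type} [Field K] {n : ℕ} {ε : ℕ → Bool} (A B : Rep K n ε) where
  app : ∀ m, A.V m →ₗ[K] B.V m
  comm : ∀ m, (app (atgt ε m)).comp (A.φ m) = (B.φ m).comp (app (asrc ε m))

/-- Vertex space of the indecomposable `X_{i,j}` (for `0 ≤ i < j ≤ n`): `K` at the
vertices `i+1, …, j` and `0` elsewhere. -/
def XV (K : Type) [Field K] (n i j m : ℕ) : Submodule K K :=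
  if i + 1 ≤ m ∧ m ≤ j ∧ m ≤ n then ⊤ else ⊥

/-- Arrow map of the indecomposable `X_{i,j}`: the identity whenever both endpoints of the
arrow lie in the support, and zero otherwise. -/
def Xφ (K : Type) [Field K] (n : ℕ) (ε : ℕ → Bool) (i j m : ℕ) :
    XV K n i j (asrc ε m) →ₗ[K] XV K n i j (atgt ε m) :=
  if h : i + 1 ≤ atgt ε m ∧ atgt ε m ≤ j ∧ atgt ε m ≤ n then
    LinearMap.codRestrict _ (XV K n i j (asrc ε m)).subtype
      (fun x => by simp [XV, h.1, h.2.1, h.2.2])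
  else 0

/-- The indecomposable representation `X_{i,j}` of `Q_ε`. -/
def Xrep (K : Type) [Field K] (n : ℕ) (ε : ℕ → Bool) (i j : ℕ) : Rep K n ε where
  V m := XV K n i j m
  instAdd _ := inferInstance
  instMod _ := inferInstance
  instFin _ := inferInstance
  triv m hm := by
    have hneg : ¬ (i + 1 ≤ m ∧ m ≤ j ∧ m ≤ n) := by omega
    have hbot : XV K n i j m = ⊥ := by unfold XV; rw [if_neg hneg]
    show Subsingleton (XV K n i j m)
    rw [hbot]
    infer_instance
  φ m := Xφ K n ε i j m

variable {K : Type} [Field K]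

/-- `Hom(A, B) = 0`. -/
def homZero {n : ℕ} {ε : ℕ → Bool} (A B : Rep K n ε) : Prop :=
  ∀ θ : RepHom A B, ∀ m, θ.app m = 0

/-- `Hom(A, B) ≠ 0`. -/
def homNonzero {n : ℕ} {ε : ℕ → Bool} (A B : Rep K n ε) : Prop :=
  ∃ θ : RepHom A B, ∃ m, θ.app m ≠ 0

/-- `0 → B → E → A → 0` is a short exact sequence. -/
def IsSES {n : ℕ} {ε : ℕ → Bool} {B E A : Rep K n ε}
    (f : RepHom B E) (g : RepHom E A) : Prop :=
  (∀ m, Function.Injective (f.app m)) ∧ (∀ m, Function.Surjective (g.app m)) ∧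
    (∀ m, LinearMap.range (f.app m) = LinearMap.ker (g.app m))

/-- The short exact sequence `0 → B → E → A → 0` splits. -/
def Splits {n : ℕ} {ε : ℕ → Bool} {E A : Rep K n ε} (g : RepHom E A) : Prop :=
  ∃ s : RepHom A E, ∀ m, (g.app m).comp (s.app m) = LinearMap.id

/-- `Ext¹(A, B) ≠ 0`: there is a nonsplit short exact sequence `0 → B → E → A → 0`. -/
def extNonzero {n : ℕ} {ε : ℕ → Bool} (A B : Rep K n ε) : Prop :=
  ∃ (E : Rep K n ε) (f : RepHom B E) (g : RepHom E A), IsSES f g ∧ ¬ Splits g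

/-- `Ext¹(A, B) = 0`. -/
def extZero {n : ℕ} {ε : ℕ → Bool} (A B : Rep K n ε) : Prop := ¬ extNonzero A B

/-- `(U, V)` is an exceptional pair: `Hom(V,U) = 0` and `Ext¹(V,U) = 0`. -/
def ExcPair {n : ℕ} {ε : ℕ → Bool} (U V : Rep K n ε) : Prop := homZero V U ∧ extZero V U


/-- The chords `c = {c.1, c.2}` and `d = {d.1, d.2}` (with `c.1 < c.2`, `d.1 < d.2`) cross. -/
def Crosses (ε : ℕ → Bool) (c d : ℕ × ℕ) : Prop :=
  (c.1 < d.1 ∧ d.1 < c.2 ∧ c.2 < d.2 ∧ ε d.1 = ε c.2) ∨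
  (d.1 < c.1 ∧ c.1 < d.2 ∧ d.2 < c.2 ∧ ε c.1 = ε d.2) ∨
  (c.1 < d.1 ∧ d.1 < d.2 ∧ d.2 < c.2 ∧ ε d.1 ≠ ε d.2) ∨
  (d.1 < c.1 ∧ c.1 < c.2 ∧ c.2 < d.2 ∧ ε c.1 ≠ ε c.2)

/-- The chords `c` and `d` share an endpoint. -/
def SharesEndpoint (c d : ℕ × ℕ) : Prop :=
  c.1 = d.1 ∨ c.1 = d.2 ∨ c.2 = d.1 ∨ c.2 = d.2

/-- The chord `c` is clockwise from the chord `d` (chords written with `c.1 < c.2`, `d.1 < d.2`). -/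
def Cw (ε : ℕ → Bool) (c d : ℕ × ℕ) : Prop :=
  (c.2 = d.1 ∧ ε c.2 = true) ∨
  (d.2 = c.1 ∧ ε c.1 = false) ∨
  (c.1 = d.1 ∧ ((c.2 < d.2 ∧ ε c.2 = false) ∨ (d.2 < c.2 ∧ ε d.2 = true))) ∨
  (c.2 = d.2 ∧ ((c.1 < d.1 ∧ ε d.1 = false) ∨ (d.1 < c.1 ∧ ε c.1 = true)))

/-- The graph on `{0,…,n} ⊆ ℕ` determined by a finite set of chords. -/
def chordGraph (d : Finset (ℕ × ℕ)) : SimpleGraph ℕ :=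
  SimpleGraph.fromEdgeSet {e : Sym2 ℕ | ∃ c ∈ d, e = s(c.1, c.2)}

/-- The graph on `{0,…,n} ⊆ ℕ` determined by a family of chords. -/
def chordGraphF {k : ℕ} (c : Fin k → ℕ × ℕ) : SimpleGraph ℕ :=
  SimpleGraph.fromEdgeSet {e : Sym2 ℕ | ∃ a : Fin k, e = s((c a).1, (c a).2)}

/-- `d` is a strand diagram on `S_{n,ε}`: valid pairwise-noncrossing chords forming a forest. -/
def IsDiagram (n : ℕ) (ε : ℕ → Bool) (d : Finset (ℕ × ℕ)) : Prop :=
  (∀ c ∈ d, c.1 < c.2 ∧ c.2 ≤ n) ∧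
  (∀ c ∈ d, ∀ c' ∈ d, ¬ Crosses ε c c') ∧
  (chordGraph d).IsAcyclic

/-- The family `c` is a strand diagram (pairwise-noncrossing chords forming a forest). -/
def IsDiagramF {k : ℕ} (ε : ℕ → Bool) (c : Fin k → ℕ × ℕ) : Prop :=
  (∀ a b : Fin k, ¬ Crosses ε (c a) (c b)) ∧ (chordGraphF c).IsAcyclic

/-- The partial order of the poset `P_d`: `x ≤ y` iff there is a chain of chords of `d`
from `x` to `y` in which each chord shares an endpoint with, and is clockwise from,
the previous one. -/
def leD (ε : ℕ → Bool) (d : Finset (ℕ × ℕ)) : ℕ × ℕ → ℕ × ℕ → Prop :=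
  Relation.ReflTransGen (fun x y => x ∈ d ∧ y ∈ d ∧ SharesEndpoint x y ∧ Cw ε y x)

abbrev In (n i j m : ℕ) : Prop := i + 1 ≤ m ∧ m ≤ j ∧ m ≤ n

theorem XV_zero {n i j m : ℕ} (h : ¬ In n i j m) (x : XV K n i j m) : (x : K) = 0 := by
  have hx := x.2
  have hb : XV K n i j m = ⊥ := by unfold XV; rw [if_neg h]
  exact (Submodule.mem_bot K).1 (hb ▸ hx)

theorem arr (ε : ℕ → Bool) (m : ℕ) : (ε m = true ∧ asrc ε m = m ∧ atgt ε m = m + 1) ∨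
    (ε m = false ∧ asrc ε m = m + 1 ∧ atgt ε m = m) := by
  unfold asrc atgt
  cases ε m <;> simp

theorem XV_mem {n i j m : ℕ} (h : In n i j m) (c : K) : c ∈ XV K n i j m := by
  unfold XV; rw [if_pos h]; trivial

theorem Xφ_coe {n : ℕ} {ε : ℕ → Bool} {i j m : ℕ} (x : XV K n i j (asrc ε m)) :
    (Xφ K n ε i j m x : K) = if In n i j (atgt ε m) then (x : K) else 0 := by
  unfold Xφ
  split_ifs with h
  · rfl
  · rfl

def scal (n k l i j m m' : ℕ) (c : K) : XV K n k l m →ₗ[K] XV K n i j m' :=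
  if h : In n i j m' then
    LinearMap.codRestrict _ (c • (XV K n k l m).subtype) (fun _ => XV_mem h _)
  else 0

theorem scal_coe {n k l i j m m' : ℕ} {c : K} (x : XV K n k l m) :
    (scal n k l i j m m' c x : K) = if In n i j m' then c * x else 0 := by
  unfold scal
  split_ifs with h
  · rfl
  · rfl

theorem exists_scal {n k l i j m m' : ℕ} (f : XV K n k l m →ₗ[K] XV K n i j m') :
    ∃ c : K, ∀ x, (f x : K) = c * x := by
  by_cases h : In n k l m
  · refine ⟨f ⟨1, XV_mem h 1⟩, fun x => ?_⟩
    have hx : x = (x : K) • (⟨1, XV_mem h 1⟩ : XV K n k l m) := by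
      ext; simp
    conv_lhs => rw [hx, map_smul]
    simp [mul_comm]
  · refine ⟨0, fun x => ?_⟩
    have hx : x = 0 := by ext; simpa using XV_zero h x
    rw [hx]; simp

def HomEq (n : ℕ) (ε : ℕ → Bool) (k l i j : ℕ) (t : ℕ → K) : Prop :=
  ∀ m, In n k l (asrc ε m) → In n i j (atgt ε m) →
    (if In n k l (atgt ε m) then t (atgt ε m) else 0) =
      if In n i j (asrc ε m) then t (asrc ε m) else 0

theorem mkHom {n : ℕ} {ε : ℕ → Bool} {k l i j : ℕ} (t : ℕ → K) (h : HomEq n ε k l i j t) :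
    ∃ θ : RepHom (Xrep K n ε k l) (Xrep K n ε i j), ∀ m, θ.app m = scal n k l i j m m (t m) := by
  refine ⟨⟨fun m => scal n k l i j m m (t m), fun m => ?_⟩, fun m => rfl⟩
  apply LinearMap.ext
  intro (x : XV K n k l (asrc ε m))
  apply Subtype.ext
  change (scal n k l i j _ (atgt ε m) (t (atgt ε m)) (Xφ K n ε k l m x) : K) =
    (Xφ K n ε i j m (scal n k l i j _ _ (t (asrc ε m)) x) : K)
  rw [scal_coe, Xφ_coe, Xφ_coe, scal_coe]
  by_cases h1 : In n i j (atgt ε m)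
  · by_cases h2 : In n k l (asrc ε m)
    · have := h m h2 h1
      rw [if_pos h1, if_pos h1]
      split_ifs at this ⊢ with h3 h4 h4
      · rw [this]
      · rw [this, zero_mul]
      · rw [← this, mul_zero, zero_mul]
      · rw [mul_zero]
    · have := XV_zero h2 x
      simp [this]
  · simp [h1]

theorem homData {n : ℕ} {ε : ℕ → Bool} {k l i j : ℕ}
    (θ : RepHom (Xrep K n ε k l) (Xrep K n ε i j)) :
    ∃ t : ℕ → K, HomEq n ε k l i j t ∧
      ∀ m (x : XV K n k l m), ((show XV K n i j m from θ.app m x) : K) = t m * x := by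
  choose t ht using fun m => exists_scal (n := n) (k := k) (l := l) (i := i) (j := j)
    (show XV K n k l m →ₗ[K] XV K n i j m from θ.app m)
  refine ⟨t, fun m h1 h2 => ?_, ht⟩
  have hc := LinearMap.congr_fun (θ.comm m) (⟨1, XV_mem h1 1⟩ : XV K n k l (asrc ε m))
  have hc' : ((show XV K n k l _ →ₗ[K] XV K n i j _ from θ.app (atgt ε m))
      (Xφ K n ε k l m ⟨1, XV_mem h1 1⟩) : K) = (Xφ K n ε i j m
      ((show XV K n k l _ →ₗ[K] XV K n i j _ from θ.app (asrc ε m)) ⟨1, XV_mem h1 1⟩) : K) :=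
    congrArg Subtype.val hc
  rw [ht, Xφ_coe, Xφ_coe, if_pos h2, ht] at hc'
  by_cases h3 : In n i j (asrc ε m)
  · rw [if_pos h3]
    split_ifs at hc' ⊢ <;> simpa using hc'
  · have h4 := XV_zero h3 ((show XV K n k l _ →ₗ[K] XV K n i j _ from θ.app (asrc ε m))
      ⟨1, XV_mem h1 1⟩)
    rw [ht] at h4
    rw [h4] at hc'
    rw [if_neg h3]
    split_ifs at hc' ⊢ <;> simpa using hc'

theorem extZero_of {n : ℕ} {ε : ℕ → Bool} (A B : Rep K n ε)
    (h : ∀ d : ∀ m, A.V (asrc ε m) →ₗ[K] B.V (atgt ε m), ∃ t : ∀ m, A.V m →ₗ[K] B.V m,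
      ∀ m x, B.φ m (t _ x) - t _ (A.φ m x) = d m x) : extZero A B := by
  rintro ⟨E, f, g, ⟨hf, hg, hfg⟩, hs⟩
  apply hs
  choose s hs using fun m => (g.app m).exists_rightInverse_of_surjective
    (LinearMap.range_eq_top.2 (hg m))
  have hs' : ∀ m x, g.app m (s m x) = x := fun m x => LinearMap.congr_fun (hs m) x
  have gc : ∀ m x, g.app _ (E.φ m x) = A.φ m (g.app _ x) := fun m x =>
    LinearMap.congr_fun (g.comm m) x
  have fc : ∀ m x, f.app _ (B.φ m x) = E.φ m (f.app _ x) := fun m x =>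
    LinearMap.congr_fun (f.comm m) x
  have gf : ∀ m x, g.app m (f.app m x) = 0 := fun m x => by
    have : f.app m x ∈ LinearMap.range (f.app m) := ⟨x, rfl⟩
    rw [hfg] at this
    exact this
  have hd : ∀ m, ∃ d : A.V (asrc ε m) →ₗ[K] B.V (atgt ε m), ∀ x,
      f.app _ (d x) = E.φ m (s _ x) - s _ (A.φ m x) := by
    intro m
    let D : A.V (asrc ε m) →ₗ[K] E.V (atgt ε m) := (E.φ m).comp (s _) - (s _).comp (A.φ m)
    have hD : ∀ x, D x ∈ LinearMap.range (f.app (atgt ε m)) := by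
      intro x
      rw [hfg, LinearMap.mem_ker]
      change g.app _ (E.φ m (s _ x) - s _ (A.φ m x)) = 0
      rw [map_sub, gc, hs', hs', sub_self]
    refine ⟨(LinearEquiv.ofInjective _ (hf _)).symm.toLinearMap.comp (D.codRestrict _ hD),
      fun x => ?_⟩
    have := (LinearEquiv.ofInjective _ (hf (atgt ε m))).apply_symm_apply (D.codRestrict _ hD x)
    exact congrArg Subtype.val this
  choose d hd using hd
  obtain ⟨t, ht⟩ := h d
  refine ⟨⟨fun m => s m - (f.app m).comp (t m), fun m => ?_⟩, fun m => ?_⟩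
  · ext x
    have h1 := hd m x
    rw [← ht m x, map_sub, fc] at h1
    change s _ (A.φ m x) - f.app _ (t _ (A.φ m x)) = E.φ m (s _ x - f.app _ (t _ x))
    rw [map_sub]
    have h2 : E.φ m ((s (asrc ε m)) x) = E.φ m ((f.app (asrc ε m)) (t (asrc ε m) x)) -
      (f.app (atgt ε m)) (t (atgt ε m) (A.φ m x)) + s (atgt ε m) (A.φ m x) := by
      rw [h1]; abel
    rw [h2]; abel
  · ext x
    change g.app m (s m x - f.app m (t m x)) = x
    rw [map_sub, hs', gf, sub_zero]

theorem extZero_X {n : ℕ} {ε : ℕ → Bool} {k l i j : ℕ}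
    (h : ∀ d : ℕ → K, ∃ t : ℕ → K, ∀ m, In n k l (asrc ε m) → In n i j (atgt ε m) →
      (if In n i j (asrc ε m) then t (asrc ε m) else 0) -
      (if In n k l (atgt ε m) then t (atgt ε m) else 0) = d m) :
    extZero (Xrep K n ε k l) (Xrep K n ε i j) := by
  apply extZero_of
  intro d
  choose c hc using fun m => exists_scal (n := n) (k := k) (l := l) (i := i) (j := j)
    (show XV K n k l (asrc ε m) →ₗ[K] XV K n i j (atgt ε m) from d m)
  obtain ⟨t, ht⟩ := h c
  refine ⟨fun m => scal n k l i j m m (t m), fun m (x : XV K n k l (asrc ε m)) => ?_⟩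
  apply Subtype.ext
  refine Eq.trans ?_ (hc m x).symm
  change (Xφ K n ε i j m (scal n k l i j _ _ (t (asrc ε m)) x) : K) -
    (scal n k l i j _ (atgt ε m) (t (atgt ε m)) (Xφ K n ε k l m x) : K) = _
  rw [scal_coe, Xφ_coe, Xφ_coe, scal_coe]
  by_cases h1 : In n i j (atgt ε m)
  · by_cases h2 : In n k l (asrc ε m)
    · have := ht m h2 h1
      rw [if_pos h1, if_pos h1, ← this]
      split_ifs <;> ring
    · have := XV_zero h2 x
      simp [this]
  · have := XV_zero h1 ((show XV K n k l (asrc ε m) →ₗ[K] XV K n i j (atgt ε m) from d m) x)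
    rw [hc] at this
    simp [h1, this]

def La (ε : ℕ → Bool) (k i : ℕ) : Prop := (k < i ∧ ε i = true) ∨ (i < k ∧ ε k = false)
def Ra (ε : ℕ → Bool) (l j : ℕ) : Prop := (j < l ∧ ε j = false) ∨ (l < j ∧ ε l = true)

theorem not_homZero_X {n : ℕ} {ε : ℕ → Bool} {k l i j : ℕ} (hjn : j ≤ n) (hln : l ≤ n)
    (h : max i k < min j l) (hL : ¬ La ε k i) (hR : ¬ Ra ε l j) :
    ¬ homZero (Xrep K n ε k l) (Xrep K n ε i j) := by
  intro hz
  have hh : HomEq n ε k l i j (fun _ => (1 : K)) := by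
    intro m h1 h2
    have : In n k l (atgt ε m) ↔ In n i j (asrc ε m) := by
      unfold La at hL
      unfold Ra at hR
      clear hz
      rcases arr ε m with ⟨hm, hs, ht⟩ | ⟨hm, hs, ht⟩ <;> rw [hs] at h1 ⊢ <;>
        rw [ht] at h2 ⊢ <;> clear hs ht <;> grind
    simp only [this]
  obtain ⟨θ, hθ⟩ := mkHom _ hh
  have h0 := (hθ (min j l)).symm.trans (hz θ (min j l))
  have hA : In n k l (min j l) := by unfold In; omega
  have hB : In n i j (min j l) := by unfold In; omega
  have h1 := congrArg Subtype.val
    (LinearMap.congr_fun h0 (⟨1, XV_mem hA 1⟩ : XV K n k l (min j l)))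
  have h2 := (scal_coe (c := (1 : K)) (i := i) (j := j) (m' := min j l)
    (⟨1, XV_mem hA 1⟩ : XV K n k l (min j l))).symm.trans h1
  rw [if_pos hB] at h2
  exact one_ne_zero ((mul_one (1 : K)).symm.trans h2)

theorem homZero_X {n : ℕ} {ε : ℕ → Bool} {k l i j : ℕ}
    (h : max i k < min j l → La ε k i ∨ Ra ε l j) (hjn : j ≤ n) (hln : l ≤ n) :
    homZero (Xrep K n ε k l) (Xrep K n ε i j) := by
  intro θ
  obtain ⟨t, ht, hθ⟩ := homData θ
  have key : ∀ m, In n k l m → In n i j m → t m = 0 := by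
    intro m0 hA hB
    have hp : max i k < min j l := by unfold In at hA hB; omega
    have step : ∀ m, max i k < m → m < min j l → t m = t (m + 1) := by
      intro m h1 h2
      have e1 : In n k l m := by unfold In; omega
      have e2 : In n k l (m + 1) := by unfold In; omega
      have e3 : In n i j m := by unfold In; omega
      have e4 : In n i j (m + 1) := by unfold In; omega
      rcases arr ε m with ⟨hm, hs, hs'⟩ | ⟨hm, hs, hs'⟩
      · have := ht m (by rw [hs]; exact e1) (by rw [hs']; exact e4)
        rw [hs, hs', if_pos e2, if_pos e3] at this
        exact this.symm
      · have := ht m (by rw [hs]; exact e2) (by rw [hs']; exact e3)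
        rw [hs, hs', if_pos e1, if_pos e4] at this
        exact this
    rcases h hp with hl | hr
    · have h0 : t (max i k + 1) = 0 := by
        have := ht (max i k)
        unfold La at hl
        clear hθ step h ht
        rcases arr ε (max i k) with ⟨hm, hs, ht⟩ | ⟨hm, hs, ht⟩ <;> rw [hs, ht] at this <;>
          grind
      have : ∀ r, max i k + 1 + r ≤ min j l → t (max i k + 1 + r) = 0 := by
        intro r
        induction r with
        | zero => intro _; exact h0
        | succ r ih =>
          intro hr
          rw [← add_assoc, ← step _ (by omega) (by omega)]
          exact ih (by omega)
      have h2 := this (m0 - (max i k + 1)) (by unfold In at hA hB; omega)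
      rwa [Nat.add_sub_cancel' (by unfold In at hA hB; omega)] at h2
    · have h0 : t (min j l) = 0 := by
        have := ht (min j l)
        unfold Ra at hr
        clear hθ step h ht
        rcases arr ε (min j l) with ⟨hm, hs, ht⟩ | ⟨hm, hs, ht⟩ <;> rw [hs, ht] at this <;>
          grind
      have : ∀ r, max i k + r < min j l → t (min j l - r) = 0 := by
        intro r
        induction r with
        | zero => intro _; exact h0
        | succ r ih =>
          intro hr
          rw [step _ (by omega) (by omega), show min j l - (r + 1) + 1 = min j l - r by omega]
          exact ih (by omega)
      have h2 := this (min j l - m0) (by unfold In at hA hB; omega)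
      rwa [Nat.sub_sub_self (by unfold In at hA hB; omega)] at h2
  intro m
  apply LinearMap.ext
  intro (x : XV K n k l m)
  apply Subtype.ext
  refine (hθ m x).trans ?_
  change t m * (x : K) = 0
  by_cases hA : In n k l m
  · by_cases hB : In n i j m
    · rw [key m hA hB, zero_mul]
    · rw [← hθ]
      exact XV_zero hB _
  · rw [XV_zero hA, mul_zero]

theorem extZero_Xrep {n : ℕ} {ε : ℕ → Bool} {k l i j : ℕ}
    (hij : i < j) (hkl : k < l) (h1 : i ≠ l) (h2 : j ≠ k)
    (h : max i k < min j l → ¬ (La ε k i ∧ Ra ε l j)) (hjn : j ≤ n) (hln : l ≤ n) :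
    extZero (Xrep K n ε k l) (Xrep K n ε i j) := by
  apply extZero_X
  intro d
  let e : ℕ → K := fun m => if ε m then - d m else d m
  let S : ℕ → K := fun m => ∑ r ∈ Finset.range m, e r
  have hS : ∀ m, S (m + 1) = S m + e m := fun m => Finset.sum_range_succ _ _
  have he : ∀ m, e m = if ε m then - d m else d m := fun m => rfl
  have main : ∃ t : ℕ → K, (∀ m, t (m + 1) = t m + e m) ∧
      (max i k < min j l → La ε k i → t (max i k) = 0) ∧
      (max i k < min j l → Ra ε l j → t (min j l + 1) = 0) := by
    by_cases hL : La ε k i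
    · refine ⟨fun m => S m - S (max i k), fun m => ?_, fun _ _ => sub_self _, fun hp hr => ?_⟩
      · simp only [hS]; ring
      · exact absurd ⟨hL, hr⟩ (h hp)
    · refine ⟨fun m => S m - S (min j l + 1), fun m => ?_, fun _ hl => absurd hl hL,
        fun _ _ => sub_self _⟩
      simp only [hS]; ring
  obtain ⟨t, ht0, hl, hr⟩ := main
  refine ⟨t, fun m hA hB => ?_⟩
  have htm := ht0 m
  clear ht0
  rw [he] at htm
  unfold La at hl
  unfold Ra at hr
  by_cases hmp : m = max i k
  · rw [← hmp] at hl
    rcases arr ε m with ⟨hm, hs, ht⟩ | ⟨hm, hs, ht⟩ <;> rw [hs] at hA ⊢ <;> rw [ht] at hB ⊢ <;> rw [hm] at htm <;>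
      clear he hS hs ht <;> grind
  · by_cases hmq : m = min j l
    · rw [← hmq] at hr
      rcases arr ε m with ⟨hm, hs, ht⟩ | ⟨hm, hs, ht⟩ <;> rw [hs] at hA ⊢ <;> rw [ht] at hB ⊢ <;> rw [hm] at htm <;>
      clear he hS hs ht <;> grind
    · clear hl hr h
      rcases arr ε m with ⟨hm, hs, ht⟩ | ⟨hm, hs, ht⟩ <;> rw [hs] at hA ⊢ <;> rw [ht] at hB ⊢ <;> rw [hm] at htm <;>
      clear he hS hs ht <;> grind

/-- `A = X_{k,l}`, `B = X_{i,j}`, middle term `X_{e,f}`. -/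
theorem extNonzero_X {n : ℕ} {ε : ℕ → Bool} {k l i j e f : ℕ} (hkl : k < l) (hln : l ≤ n)
    (h1 : ∀ m, In n e f m ↔ (In n k l m ∨ In n i j m))
    (h2 : ∀ m, ¬ (In n k l m ∧ In n i j m))
    (h3 : HomEq n ε i j e f (fun _ => (1 : K))) (h4 : HomEq n ε e f k l (fun _ => (1 : K)))
    (h5 : homZero (Xrep K n ε k l) (Xrep K n ε e f)) :
    extNonzero (Xrep K n ε k l) (Xrep K n ε i j) := by
  obtain ⟨φ, hφ⟩ := mkHom _ h3
  obtain ⟨ψ, hψ⟩ := mkHom _ h4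
  have hφ' : ∀ m (x : XV K n i j m), ((show XV K n e f m from φ.app m x) : K) = x := by
    intro m x
    rw [hφ]
    refine (scal_coe x).trans ?_
    split_ifs with h
    · exact one_mul _
    · rw [XV_zero (fun h' => h ((h1 m).2 (Or.inr h'))) x]
  have hψ' : ∀ m (x : XV K n e f m), ((show XV K n k l m from ψ.app m x) : K) =
      if In n k l m then (x : K) else 0 := by
    intro m x
    rw [hψ]
    refine (scal_coe x).trans ?_
    rw [one_mul]
  refine ⟨_, φ, ψ, ⟨fun m x y hxy => ?_, fun m y => ?_, fun m => ?_⟩, ?_⟩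
  · apply Subtype.ext
    have := congrArg Subtype.val hxy
    exact (hφ' m x).symm.trans (this.trans (hφ' m y))
  · by_cases h : In n k l m
    · refine ⟨(⟨_, XV_mem ((h1 m).2 (Or.inl h)) (show XV K n k l m from y).1⟩ :
        XV K n e f m), ?_⟩
      apply Subtype.ext
      refine (hψ' m _).trans ?_
      exact if_pos h
    · refine ⟨0, ?_⟩
      apply Subtype.ext
      refine (hψ' m _).trans ?_
      rw [if_neg h]
      exact (XV_zero h y).symm
  · apply le_antisymm
    · rintro _ ⟨x, rfl⟩
      rw [LinearMap.mem_ker]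
      apply Subtype.ext
      refine (hψ' m _).trans ?_
      split_ifs with h
      · refine (hφ' m x).trans ?_
        exact XV_zero (fun h' => h2 m ⟨h, h'⟩) x
      · rfl
    · intro x hx
      rw [LinearMap.mem_ker] at hx
      have hx' := (hψ' m x).symm.trans (congrArg Subtype.val hx)
      by_cases h : In n i j m
      · refine ⟨(⟨_, XV_mem h (show XV K n e f m from x).1⟩ : XV K n i j m), ?_⟩
        apply Subtype.ext
        exact hφ' m _
      · refine ⟨0, ?_⟩
        rw [map_zero]
        apply Subtype.ext
        by_cases h' : In n k l m
        · rw [if_pos h'] at hx'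
          exact hx'.symm
        · exact (XV_zero (fun h'' => ((h1 m).1 h'').elim h' h) x).symm
  · rintro ⟨s, hs⟩
    have hA : In n k l l := by unfold In; omega
    have h6 := hs l
    rw [h5 s l, LinearMap.comp_zero] at h6
    have h7 := congrArg Subtype.val
      (LinearMap.congr_fun h6 (⟨1, XV_mem hA 1⟩ : XV K n k l l))
    exact zero_ne_one h7

theorem extNonzero_adj {n : ℕ} {ε : ℕ → Bool} {i j l : ℕ} (hij : i < j) (hjl : j < l)
    (hln : l ≤ n) : extNonzero (Xrep K n ε i j) (Xrep K n ε j l) ∨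
      extNonzero (Xrep K n ε j l) (Xrep K n ε i j) := by
  cases hj : ε j
  · right
    apply extNonzero_X (e := i) (f := l) hjl hln
    · intro m; unfold In; omega
    · intro m; unfold In; omega
    · intro m
      rcases arr ε m with ⟨hm, hs, ht⟩ | ⟨hm, hs, ht⟩ <;> rw [hs, ht] <;> grind
    · intro m
      rcases arr ε m with ⟨hm, hs, ht⟩ | ⟨hm, hs, ht⟩ <;> rw [hs, ht] <;> grind
    · apply homZero_X _ (by omega) (by omega)
      intro _
      left; right; exact ⟨hij, hj⟩
  · left
    apply extNonzero_X (e := i) (f := l) hij (by omega)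
    · intro m; unfold In; omega
    · intro m; unfold In; omega
    · intro m
      rcases arr ε m with ⟨hm, hs, ht⟩ | ⟨hm, hs, ht⟩ <;> rw [hs, ht] <;> grind
    · intro m
      rcases arr ε m with ⟨hm, hs, ht⟩ | ⟨hm, hs, ht⟩ <;> rw [hs, ht] <;> grind
    · apply homZero_X _ (by omega) (by omega)
      intro _
      right; right; exact ⟨hjl, hj⟩

/-- Lemma 3.5 c): both `(U,V)` and `(V,U)` are exceptional iff the strands share no
endpoint and do not intersect nontrivially. -/
theorem both_exceptional_iff_disjoint_noncrossing (K : Type) [Field K] (n : ℕ)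
    (ε : ℕ → Bool) (i j k l : ℕ) (hij : i < j) (hjn : j ≤ n) (hkl : k < l) (hln : l ≤ n)
    (hne : ¬(i = k ∧ j = l)) :
    (ExcPair (Xrep K n ε i j) (Xrep K n ε k l) ∧
     ExcPair (Xrep K n ε k l) (Xrep K n ε i j)) ↔
      ((i ≠ k ∧ i ≠ l ∧ j ≠ k ∧ j ≠ l) ∧ ¬ Crosses ε (i, j) (k, l)) := by
  constructor
  · rintro ⟨⟨h1, h2⟩, ⟨h3, h4⟩⟩
    have hli : i ≠ l := by
      rintro rfl
      rcases extNonzero_adj (K := K) (ε := ε) hkl hij hjn with h | h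
      · exact h2 h
      · exact h4 h
    have hjk : j ≠ k := by
      rintro rfl
      rcases extNonzero_adj (K := K) (ε := ε) hij hkl hln with h | h
      · exact h4 h
      · exact h2 h
    have a1 : max i k < min j l → La ε k i ∨ Ra ε l j := by
      intro hp
      by_contra hc
      push Not at hc
      exact not_homZero_X hjn hln hp hc.1 hc.2 h1
    have a2 : max k i < min l j → La ε i k ∨ Ra ε j l := by
      intro hp
      by_contra hc
      push Not at hc
      exact not_homZero_X hln hjn hp hc.1 hc.2 h3
    clear h1 h2 h3 h4
    unfold La Ra at a1 a2
    unfold Crosses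
    grind
  · rintro ⟨⟨n1, n2, n3, n4⟩, hc⟩
    unfold Crosses at hc
    refine ⟨⟨homZero_X ?_ hjn hln, extZero_Xrep hij hkl n2 n3 ?_ hjn hln⟩,
      ⟨homZero_X ?_ hln hjn, extZero_Xrep hkl hij n3.symm n2.symm ?_ hln hjn⟩⟩ <;>
    · unfold La Ra
      grind

end ESPaper
end

section
/- Let n ≥ 1 and ε = (−,…,−). A finite poset P with exactly n elements is isomorphic to the poset P_d of some strand diagram d with n strands on {0,…,n} (i.e. some noncrossing spanning tree on {0,…,n}) if and only if: (i) each element of P covers at most two elements and is covered by at most two elements; (ii) the underlying undirected graph of the Hasse diagram of P has no cycles; and (iii) the underlying undirected graph of the Hasse diagram of P is connected. -/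
namespace ESPaper

def Inc (v : ℕ) (c : ℕ × ℕ) : Prop := c.1 = v ∨ c.2 = v

def key (n v : ℕ) (c : ℕ × ℕ) : ℤ := if c.1 = v then (n : ℤ) + 1 - c.2 else -(c.1 : ℤ)

def gen (n : ℕ) (c c' : ℕ × ℕ) : Prop := ∃ v, Inc v c ∧ Inc v c' ∧ key n v c < key n v c'

structure Rep_s14 (n : ℕ) {P : Type} [PartialOrder P] (f : P → ℕ × ℕ) : Prop where
  inj : Function.Injective f
  lt : ∀ x, (f x).1 < (f x).2
  le : ∀ x, (f x).2 ≤ n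
  nc : ∀ a b, ¬ ((f a).1 < (f b).1 ∧ (f b).1 < (f a).2 ∧ (f a).2 < (f b).2)
  cut : ∀ x, ∃ S : Set ℕ, (f x).1 ∈ S ∧ (f x).2 ∉ S ∧ ∀ b, b ≠ x → ((f b).1 ∈ S ↔ (f b).2 ∈ S)
  gen_lt : ∀ a b, gen n (f a) (f b) → a < b
  cov_gen : ∀ a b, a ⋖ b → gen n (f a) (f b)

lemma gen_iff (n : ℕ) (x y : ℕ × ℕ) (hx : x.1 < x.2) (hx' : x.2 ≤ n) (hy : y.1 < y.2)
    (hy' : y.2 ≤ n) :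
    (SharesEndpoint x y ∧ Cw (fun _ => false) y x) ↔ gen n x y := by
  obtain ⟨a, b⟩ := x
  obtain ⟨c, d⟩ := y
  simp only [SharesEndpoint, Cw, gen, Inc, key] at *
  constructor
  · rintro ⟨-, h⟩
    rcases h with h | h | h | h
    · simp at h
    · exact ⟨b, by omega, by omega, by split_ifs <;> omega⟩
    · exact ⟨a, by omega, by omega, by simp at h; split_ifs <;> omega⟩
    · exact ⟨b, by omega, by omega, by simp at h; split_ifs <;> omega⟩
  · rintro ⟨v, h1, h2, h3⟩
    simp only [Bool.false_eq_true, and_false, or_false, false_or, and_true]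
    split_ifs at h3 <;> omega

section
variable {P : Type} [PartialOrder P] {n : ℕ} {f : P → ℕ × ℕ}

lemma Rep_s14.eq_of_inc (h : Rep_s14 n f) {a b : P} {v w : ℕ} (hvw : v ≠ w) (h1 : Inc v (f a))
    (h2 : Inc w (f a)) (h3 : Inc v (f b)) (h4 : Inc w (f b)) : a = b := by
  apply h.inj
  have := h.lt a
  have := h.lt b
  simp only [Inc] at *
  ext <;> omega

lemma Rep_s14.eq_of_key (h : Rep_s14 n f) {a b : P} {v : ℕ} (h1 : Inc v (f a))
    (h2 : Inc v (f b)) (h3 : key n v (f a) = key n v (f b)) : a = b := by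
  apply h.inj
  have := h.lt a
  have := h.lt b
  have := h.le a
  have := h.le b
  simp only [Inc, key] at *
  split_ifs at h3 <;> ext <;> omega

/-- the separating set -/
lemma Rep_s14.sep (h : Rep_s14 n f) {x y : P} {v : ℕ} (hx : Inc v (f x)) (hy : Inc v (f y))
    (hxy : key n v (f x) < key n v (f y))
    (hno : ∀ z, Inc v (f z) → key n v (f x) < key n v (f z) → key n v (f y) ≤ key n v (f z)) :
    ∃ B : Set P, x ∉ B ∧ y ∈ B ∧ (∀ a b, gen n (f a) (f b) → a ∈ B → b ∈ B) ∧
      ∀ a b, gen n (f a) (f b) → a ∉ B → b ∈ B → Inc v (f a) ∧ Inc v (f b) ∧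
        key n v (f a) ≤ key n v (f x) ∧ key n v (f y) ≤ key n v (f b) := by
  have hcut : ∀ z, ∃ S : Set ℕ, Inc v (f z) → (v ∉ S ∧ (∀ u, u ≠ v → Inc u (f z) → u ∈ S) ∧
      ∀ b, b ≠ z → ∀ u w, Inc u (f b) → Inc w (f b) → u ∈ S → w ∈ S) := by
    intro z
    obtain ⟨S, h1, h2, h3⟩ := h.cut z
    by_cases hv : v ∈ S
    · refine ⟨Sᶜ, fun hz => ⟨by simpa using hv, ?_, ?_⟩⟩
      · rintro u hu (rfl | rfl)
        · rcases hz with hz | hz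
          · exact absurd hz hu
          · subst hz; exact absurd hv h2
        · exact h2
      · intro b hb u w hu hw
        have := h3 b hb
        rcases hu with rfl | rfl <;> rcases hw with rfl | rfl <;> simp <;> tauto
    · refine ⟨S, fun hz => ⟨hv, ?_, ?_⟩⟩
      · rintro u hu (rfl | rfl)
        · exact h1
        · rcases hz with hz | hz
          · subst hz; exact absurd h1 hv
          · exact absurd hz hu
      · intro b hb u w hu hw
        have := h3 b hb
        rcases hu with rfl | rfl <;> rcases hw with rfl | rfl <;> tauto
  choose S hS using hcut
  let B : Set P := {a | ∃ z, Inc v (f z) ∧ key n v (f y) ≤ key n v (f z) ∧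
    ∃ u, Inc u (f a) ∧ u ∈ S z}
  have hBv : ∀ a, Inc v (f a) → (a ∈ B ↔ key n v (f y) ≤ key n v (f a)) := by
    intro a ha
    constructor
    · rintro ⟨z, hz, hk, u, hu, huS⟩
      by_cases haz : a = z
      · rwa [haz]
      · exact absurd ((hS z hz).2.2 a haz u v hu ha huS) (hS z hz).1
    · intro hk
      have hl := h.lt a
      rcases ha with ha | ha
      · exact ⟨a, Or.inl ha, hk, (f a).2, Or.inr rfl,
          (hS a (Or.inl ha)).2.1 _ (by omega) (Or.inr rfl)⟩
      · exact ⟨a, Or.inr ha, hk, (f a).1, Or.inl rfl,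
          (hS a (Or.inr ha)).2.1 _ (by omega) (Or.inl rfl)⟩
  have hBw : ∀ a b w, w ≠ v → Inc w (f a) → Inc w (f b) → a ∈ B → b ∈ B := by
    rintro a b w hw ha hb ⟨z, hz, hk, u, hu, huS⟩
    refine ⟨z, hz, hk, w, hb, ?_⟩
    by_cases haz : a = z
    · subst haz
      exact (hS a hz).2.1 _ hw ha
    · exact (hS z hz).2.2 a haz u w hu ha huS
  refine ⟨B, ?_, ?_, ?_, ?_⟩
  · rw [hBv x hx]; omega
  · rw [hBv y hy]
  · rintro a b ⟨w, ha, hb, hk⟩ haB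
    by_cases hw : w = v
    · subst hw
      rw [hBv a ha] at haB
      rw [hBv b hb]; omega
    · exact hBw a b w hw ha hb haB
  · rintro a b ⟨w, ha, hb, hk⟩ haB hbB
    by_cases hw : w = v
    · subst hw
      rw [hBv a ha] at haB
      rw [hBv b hb] at hbB
      refine ⟨ha, hb, ?_, hbB⟩
      by_contra hc
      exact haB (hno a ha (by omega))
    · exact absurd (hBw b a w hw hb ha hbB) haB

lemma le_chain [Finite P] {x y : P} : x ≤ y ↔ Relation.ReflTransGen (· ⋖ ·) x y := by
  classical
  have := Fintype.ofFinite P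
  let _ : LocallyFiniteOrder P := Fintype.toLocallyFiniteOrder
  exact le_iff_reflTransGen_covBy

lemma Rep_s14.le_of_key (h : Rep_s14 n f) {a b : P} {v : ℕ} (h1 : Inc v (f a))
    (h2 : Inc v (f b)) (h3 : key n v (f a) ≤ key n v (f b)) : a ≤ b := by
  rcases h3.lt_or_eq with h3 | h3
  · exact (h.gen_lt a b ⟨v, h1, h2, h3⟩).le
  · exact (h.eq_of_key h1 h2 h3).le

lemma Rep_s14.covBy [Finite P] (h : Rep_s14 n f) {x y : P} {v : ℕ} (hx : Inc v (f x)) (hy : Inc v (f y))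
    (hxy : key n v (f x) < key n v (f y))
    (hno : ∀ z, Inc v (f z) → key n v (f x) < key n v (f z) → key n v (f y) ≤ key n v (f z)) :
    x ⋖ y := by
  obtain ⟨B, h1, h2, h3, h4⟩ := h.sep hx hy hxy hno
  have key1 : ∀ a b : P, a ≤ b → a ∉ B → b ∈ B → a ≤ x ∧ y ≤ b := by
    intro a b hab ha
    rw [le_chain] at hab
    induction hab with
    | refl => intro hb; exact absurd hb ha
    | @tail c d hc hcd ih =>
      intro hd
      by_cases hcB : c ∈ B
      · exact ⟨(ih hcB).1, (ih hcB).2.trans hcd.le⟩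
      · obtain ⟨i1, i2, i3, i4⟩ := h4 c d (h.cov_gen _ _ hcd) hcB hd
        exact ⟨(le_chain.2 hc).trans (h.le_of_key i1 hx i3), h.le_of_key hy i2 i4⟩
  refine ⟨h.gen_lt _ _ ⟨v, hx, hy, hxy⟩, fun z hxz hzy => ?_⟩
  by_cases hz : z ∈ B
  · exact absurd (key1 x z hxz.le h1 hz).2 hzy.not_ge
  · exact absurd (key1 z y hzy.le hz h2).1 hxz.not_ge

lemma Rep_s14.consec (h : Rep_s14 n f) {x y : P} (hxy : x ⋖ y) : ∃ v, Inc v (f x) ∧ Inc v (f y) ∧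
    key n v (f x) < key n v (f y) ∧
    ∀ z, Inc v (f z) → key n v (f x) < key n v (f z) → key n v (f y) ≤ key n v (f z) := by
  obtain ⟨v, hx, hy, hk⟩ := h.cov_gen _ _ hxy
  refine ⟨v, hx, hy, hk, fun z hz hxz => ?_⟩
  by_contra hc
  exact hxy.2 (h.gen_lt _ _ ⟨v, hx, hz, hxz⟩) (h.gen_lt _ _ ⟨v, hz, hy, by omega⟩)

lemma Rep_s14.hasse_acyclic (h : Rep_s14 n f) : (SimpleGraph.fromRel (fun x y : P => x ⋖ y)).IsAcyclic := by
  have main : ∀ x y : P, x ⋖ y →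
      ¬ ((SimpleGraph.fromRel (fun x y : P => x ⋖ y)).deleteEdges {s(x, y)}).Reachable x y := by
    intro x y hxy hr
    obtain ⟨v, hx, hy, hk, hno⟩ := h.consec hxy
    obtain ⟨B, h1, h2, h3, h4⟩ := h.sep hx hy hk hno
    have step : ∀ a b, a ⋖ b → s(a, b) ≠ s(x, y) → (a ∈ B ↔ b ∈ B) := by
      intro a b hab hne
      refine ⟨h3 a b (h.cov_gen _ _ hab), fun hb => ?_⟩
      by_contra ha
      obtain ⟨i1, i2, i3, i4⟩ := h4 a b (h.cov_gen _ _ hab) ha hb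
      have e1 := h.le_of_key i1 hx i3
      have e2 := h.le_of_key hy i2 i4
      have e3 : a = x := by
        by_contra hc
        exact hab.2 (lt_of_le_of_ne e1 hc) (hxy.lt.trans_le e2)
      subst e3
      have e4 : b = y := by
        by_contra hc
        exact hab.2 hxy.lt (lt_of_le_of_ne e2 (Ne.symm hc))
      subst e4
      exact hne rfl
    obtain ⟨p⟩ := hr
    have : ∀ a b : P, ((SimpleGraph.fromRel (fun x y : P => x ⋖ y)).deleteEdges {s(x, y)}).Walk a b →
        (a ∈ B ↔ b ∈ B) := by
      intro a b p
      induction p with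
      | nil => rfl
      | cons hadj p ih =>
        rw [← ih]
        simp only [SimpleGraph.deleteEdges_adj, SimpleGraph.fromRel_adj,
          Set.mem_singleton_iff] at hadj
        obtain ⟨⟨-, hh | hh⟩, hne⟩ := hadj
        · exact step _ _ hh hne
        · exact (step _ _ hh (by rwa [Sym2.eq_swap])).symm
    exact h1 ((this x y p).2 h2)
  rw [SimpleGraph.isAcyclic_iff_forall_adj_isBridge]
  intro x y hxy
  rw [SimpleGraph.isBridge_iff]
  simp only [SimpleGraph.fromRel_adj] at hxy
  obtain ⟨-, hh | hh⟩ := hxy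
  · exact main x y hh
  · rw [Sym2.eq_swap]
    exact fun hr => main y x hh hr.symm

lemma ncard_le_two {α : Type*} {s a b : Set α} (h : s ⊆ a ∪ b) (ha : a.Subsingleton)
    (hb : b.Subsingleton) : s.ncard ≤ 2 := by
  have ha' := ha.finite
  have hb' := hb.finite
  have h1 : a.ncard ≤ 1 := (Set.ncard_le_one ha').2 (fun x hx y hy => ha hx hy)
  have h2 : b.ncard ≤ 1 := (Set.ncard_le_one hb').2 (fun x hx y hy => hb hx hy)
  have := Set.ncard_le_ncard h (ha'.union hb')
  have := Set.ncard_union_le a b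
  omega

lemma Rep_s14.up_le (h : Rep_s14 n f) (x : P) : {y : P | x ⋖ y}.ncard ≤ 2 := by
  have sub : ∀ v, Inc v (f x) →
      {y : P | x ⋖ y ∧ Inc v (f y) ∧ key n v (f x) < key n v (f y)}.Subsingleton := by
    intro v hv
    rintro y ⟨h1, h2, h3⟩ z ⟨h4, h5, h6⟩
    rcases lt_trichotomy (key n v (f y)) (key n v (f z)) with hh | hh | hh
    · exact absurd (h.gen_lt _ _ ⟨v, h2, h5, hh⟩) (h4.2 h1.lt)
    · exact h.eq_of_key h2 h5 hh
    · exact absurd (h.gen_lt _ _ ⟨v, h5, h2, hh⟩) (h1.2 h4.lt)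
  refine ncard_le_two ?_ (sub (f x).1 (Or.inl rfl)) (sub (f x).2 (Or.inr rfl))
  intro y hy
  obtain ⟨v, hx, hy', hk⟩ := h.cov_gen _ _ hy
  rcases hx with rfl | rfl
  · exact Or.inl ⟨hy, hy', hk⟩
  · exact Or.inr ⟨hy, hy', hk⟩

lemma Rep_s14.down_le (h : Rep_s14 n f) (x : P) : {y : P | y ⋖ x}.ncard ≤ 2 := by
  have sub : ∀ v, Inc v (f x) →
      {y : P | y ⋖ x ∧ Inc v (f y) ∧ key n v (f y) < key n v (f x)}.Subsingleton := by
    intro v hv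
    rintro y ⟨h1, h2, h3⟩ z ⟨h4, h5, h6⟩
    rcases lt_trichotomy (key n v (f y)) (key n v (f z)) with hh | hh | hh
    · exact absurd h4.lt (h1.2 (h.gen_lt _ _ ⟨v, h2, h5, hh⟩))
    · exact h.eq_of_key h2 h5 hh
    · exact absurd h1.lt (h4.2 (h.gen_lt _ _ ⟨v, h5, h2, hh⟩))
  refine ncard_le_two ?_ (sub (f x).1 (Or.inl rfl)) (sub (f x).2 (Or.inr rfl))
  intro y hy
  obtain ⟨v, hy', hx, hk⟩ := h.cov_gen _ _ hy
  rcases hx with rfl | rfl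
  · exact Or.inl ⟨hy, hy', hk⟩
  · exact Or.inr ⟨hy, hy', hk⟩

def CG (f : P → ℕ × ℕ) : SimpleGraph ℕ :=
  SimpleGraph.fromEdgeSet {e : Sym2 ℕ | ∃ x, e = s((f x).1, (f x).2)}

lemma CG_adj (hlt : ∀ x, (f x).1 < (f x).2) {u v : ℕ} :
    (CG f).Adj u v ↔ u ≠ v ∧ ∃ x, Inc u (f x) ∧ Inc v (f x) := by
  simp only [CG, SimpleGraph.fromEdgeSet_adj, Set.mem_ofPred_eq, Inc, Sym2.eq_iff]
  constructor
  · rintro ⟨⟨x, h⟩, hne⟩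
    exact ⟨hne, x, by omega, by omega⟩
  · rintro ⟨hne, x, h1, h2⟩
    exact ⟨⟨x, by omega⟩, hne⟩

lemma acyc_iff (hinj : Function.Injective f) (hlt : ∀ x, (f x).1 < (f x).2) :
    (CG f).IsAcyclic ↔ ∀ x, ∃ S : Set ℕ, (f x).1 ∈ S ∧ (f x).2 ∉ S ∧
      ∀ b, b ≠ x → ((f b).1 ∈ S ↔ (f b).2 ∈ S) := by
  rw [SimpleGraph.isAcyclic_iff_forall_adj_isBridge]
  constructor
  · intro h x
    have hadj : (CG f).Adj (f x).1 (f x).2 :=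
      (CG_adj hlt).2 ⟨(hlt x).ne, x, Or.inl rfl, Or.inr rfl⟩
    have hb := h hadj
    rw [SimpleGraph.isBridge_iff] at hb
    refine ⟨{u | ((CG f).deleteEdges {s((f x).1, (f x).2)}).Reachable (f x).1 u},
      SimpleGraph.Reachable.refl _, hb, ?_⟩
    intro b hbx
    have : ((CG f).deleteEdges {s((f x).1, (f x).2)}).Adj (f b).1 (f b).2 := by
      rw [SimpleGraph.deleteEdges_adj]
      refine ⟨(CG_adj hlt).2 ⟨(hlt b).ne, b, Or.inl rfl, Or.inr rfl⟩, ?_⟩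
      intro hc
      rw [Set.mem_singleton_iff, Sym2.eq_iff] at hc
      have := hlt x
      have := hlt b
      exact hbx (hinj (by ext <;> omega))
    exact ⟨fun hh => hh.trans this.reachable, fun hh => hh.trans this.symm.reachable⟩
  · intro h u v hadj
    obtain ⟨hne, x, hu, hv⟩ := (CG_adj hlt).1 hadj
    obtain ⟨S, h1, h2, h3⟩ := h x
    have huv : s(u, v) = s((f x).1, (f x).2) := by
      simp only [Inc] at hu hv
      rw [Sym2.eq_iff]; omega
    rw [SimpleGraph.isBridge_iff]
    have main : ∀ a b, ((CG f).deleteEdges {s(u, v)}).Walk a b → (a ∈ S ↔ b ∈ S) := by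
      intro a b p
      induction p with
      | nil => rfl
      | @cons a c d hadj p ih =>
        rw [← ih, SimpleGraph.deleteEdges_adj, huv] at *
        obtain ⟨hac, hn⟩ := hadj
        obtain ⟨hne', z, ha, hc⟩ := (CG_adj hlt).1 hac
        have hz : s(a, c) = s((f z).1, (f z).2) := by
          simp only [Inc] at ha hc
          rw [Sym2.eq_iff]; omega
        have hzx : z ≠ x := by
          rintro rfl
          exact hn (by simpa using hz)
        have := h3 z hzx
        rcases ha with rfl | rfl <;> rcases hc with rfl | rfl <;> tauto
    rintro ⟨p⟩
    have := main _ _ p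
    rcases hu with rfl | rfl <;> rcases hv with rfl | rfl <;> tauto

lemma Rep_s14.hasse_connected [Fintype P] (h : Rep_s14 n f) (hn : 1 ≤ n) (hcard : Fintype.card P = n) :
    (SimpleGraph.fromRel (fun x y : P => x ⋖ y)).Connected := by
  classical
  have hac : (CG f).IsAcyclic := (acyc_iff h.inj h.lt).2 h.cut
  let F : SimpleGraph (Fin (n+1)) := (CG f).comap Fin.val
  have hF : F.IsAcyclic := hac.of_comap ⟨Fin.val, Fin.val_injective⟩
  obtain ⟨T, hFT, -, hT⟩ := SimpleGraph.connected_top.exists_isTree_le_of_le_of_isAcyclic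
    (le_top : F ≤ ⊤) hF
  have hTc := hT.card_edgeFinset
  have hFc : n ≤ F.edgeFinset.card := by
    refine le_trans (le_of_eq (hcard.symm.trans Finset.card_univ.symm)) ?_
    have hl : ∀ x, (f x).1 < n + 1 := fun x => by have := h.lt x; have := h.le x; omega
    have hl' : ∀ x, (f x).2 < n + 1 := fun x => by have := h.le x; omega
    refine Finset.card_le_card_of_injOn
      (fun x => s((⟨(f x).1, hl x⟩ : Fin (n+1)), (⟨(f x).2, hl' x⟩ : Fin (n+1)))) ?_ ?_
    · intro x _
      simp only [Finset.mem_coe, SimpleGraph.mem_edgeFinset, SimpleGraph.mem_edgeSet]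
      exact (CG_adj h.lt).2 ⟨(h.lt x).ne, x, Or.inl rfl, Or.inr rfl⟩
    · intro x _ y _ hxy
      simp only [Sym2.eq_iff, Fin.mk.injEq] at hxy
      have := h.lt x
      have := h.lt y
      exact h.inj (by ext <;> omega)
  have hFT' : F = T := by
    have hsub : F.edgeFinset ⊆ T.edgeFinset := SimpleGraph.edgeFinset_mono hFT
    have := Finset.eq_of_subset_of_card_le hsub (by simp at hTc; omega)
    exact SimpleGraph.edgeFinset_inj.1 this
  have hFconn : F.Connected := hFT' ▸ hT.connected
  have hreach : ∀ a b : P, a ≤ b → (SimpleGraph.fromRel (fun x y : P => x ⋖ y)).Reachable a b := by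
    intro a b hab
    rw [le_chain] at hab
    induction hab with
    | refl => rfl
    | tail _ hcd ih =>
      refine ih.trans (SimpleGraph.Adj.reachable ?_)
      simp [hcd, hcd.ne]
  have hsame : ∀ v a b, Inc v (f a) → Inc v (f b) →
      (SimpleGraph.fromRel (fun x y : P => x ⋖ y)).Reachable a b := by
    intro v a b ha hb
    rcases le_total (key n v (f a)) (key n v (f b)) with hh | hh
    · exact hreach _ _ (h.le_of_key ha hb hh)
    · exact (hreach _ _ (h.le_of_key hb ha hh)).symm
  have hwalk : ∀ u v : Fin (n+1), F.Walk u v → ∀ a b, Inc u (f a) → Inc v (f b) →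
      (SimpleGraph.fromRel (fun x y : P => x ⋖ y)).Reachable a b := by
    intro u v p
    induction p with
    | nil => exact fun a b ha hb => hsame _ a b ha hb
    | cons hadj p ih =>
      intro a b ha hb
      obtain ⟨-, z, h1, h2⟩ := (CG_adj h.lt).1 hadj
      exact (hsame _ a z ha h1).trans (ih z b h2 hb)
  have hne : Nonempty P := Fintype.card_pos_iff.1 (by omega)
  refine ⟨fun a b => ?_⟩
  have h1 := h.le a
  have h2 := h.le b
  obtain ⟨p⟩ := hFconn.preconnected ⟨(f a).2, by omega⟩ ⟨(f b).2, by omega⟩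
  exact hwalk _ _ p a b (Or.inr rfl) (Or.inr rfl)
end
def sh (w u : ℕ) : ℕ := if u < w then u else u + 1

def shc (w : ℕ) (c : ℕ × ℕ) : ℕ × ℕ := (sh w c.1, sh w c.2)

lemma gen_shc {n w : ℕ} {c d : ℕ × ℕ} (hc : c.1 < c.2) (hc' : c.2 ≤ n) (hd : d.1 < d.2)
    (hd' : d.2 ≤ n) : gen (n+1) (shc w c) (shc w d) ↔ gen n c d := by
  obtain ⟨a, b⟩ := c
  obtain ⟨c, d⟩ := d
  simp only [gen, Inc, key, shc] at *
  have key1 : ∀ p q, sh w p = sh w q ↔ p = q := by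
    intro p q; unfold sh; split_ifs <;> omega
  have key2 : ∀ p q, sh w p < sh w q ↔ p < q := by
    intro p q; unfold sh; split_ifs <;> omega
  have key3 : ∀ p, p ≤ n → sh w p ≤ n + 1 := by
    intro p hp; unfold sh; split_ifs <;> omega
  have main : ∀ v, ((if sh w a = sh w v then ((n + 1 : ℕ) : ℤ) + 1 - sh w b else -(sh w a : ℤ)) <
      (if sh w c = sh w v then ((n + 1 : ℕ) : ℤ) + 1 - sh w d else -(sh w c : ℤ))) ↔
      ((if a = v then (n : ℤ) + 1 - b else -(a : ℤ)) <
      (if c = v then (n : ℤ) + 1 - d else -(c : ℤ))) := by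
    intro v
    have e1 := key2 d b
    have e2 := key2 c a
    have e3 := key3 b hc'
    have e4 := key3 d hd'
    simp only [key1]
    split_ifs <;> omega
  constructor
  · rintro ⟨v, h1, h2, h3⟩
    rcases h1 with rfl | rfl
    · exact ⟨a, by simp, by simpa only [key1] using h2, (main a).1 h3⟩
    · exact ⟨b, by simp, by simpa only [key1] using h2, (main b).1 h3⟩
  · rintro ⟨v, h1, h2, h3⟩
    exact ⟨sh w v, by simpa only [key1] using h1, by simpa only [key1] using h2, (main v).2 h3⟩

lemma gen_up1 {n v : ℕ} {c : ℕ × ℕ} (hc : c.1 < c.2) (hc' : c.2 ≤ n) (hv : v ≤ n) :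
    gen (n+1) (shc (v+1) c) (v, v+1) ↔ Inc v c := by
  rw [← gen_iff] <;> simp only [shc, sh, SharesEndpoint, Cw, Inc] <;> (try split_ifs) <;> (try simp) <;> (try omega)

lemma gen_up2 {n v : ℕ} {c : ℕ × ℕ} (hc : c.1 < c.2) (hc' : c.2 ≤ n) (hv : v ≤ n) :
    ¬ gen (n+1) (v, v+1) (shc (v+1) c) := by
  rw [← gen_iff] <;> simp only [shc, sh, SharesEndpoint, Cw] <;> (try split_ifs) <;> (try simp) <;> (try omega)

lemma gen_dn1 {n v : ℕ} {c : ℕ × ℕ} (hc : c.1 < c.2) (hc' : c.2 ≤ n) (hv : v ≤ n) :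
    gen (n+1) (v, v+1) (shc v c) ↔ Inc v c := by
  rw [← gen_iff] <;> simp only [shc, sh, SharesEndpoint, Cw, Inc] <;> (try split_ifs) <;> (try simp) <;> (try omega)

lemma gen_dn2 {n v : ℕ} {c : ℕ × ℕ} (hc : c.1 < c.2) (hc' : c.2 ≤ n) (hv : v ≤ n) :
    ¬ gen (n+1) (shc v c) (v, v+1) := by
  rw [← gen_iff] <;> simp only [shc, sh, SharesEndpoint, Cw] <;> (try split_ifs) <;> (try simp) <;> (try omega)

lemma gen_irrefl {n : ℕ} {c : ℕ × ℕ} : ¬ gen n c c := by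
  rintro ⟨v, -, -, h⟩
  exact lt_irrefl _ h

lemma Rep_s14.step {n : ℕ} {P : Type} [PartialOrder P] {x : P} {f' : ({x}ᶜ : Set P) → ℕ × ℕ}
    (h : Rep_s14 n f') {v w : ℕ} (hw : w = v ∨ w = v + 1) (hv : v ≤ n)
    (h1 : ∀ a, gen (n+1) (shc w (f' a)) (v, v+1) → a.1 < x)
    (h2 : ∀ a, gen (n+1) (v, v+1) (shc w (f' a)) → x < a.1)
    (h3 : ∀ a : ({x}ᶜ : Set P), a.1 ⋖ x → gen (n+1) (shc w (f' a)) (v, v+1))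
    (h4 : ∀ a : ({x}ᶜ : Set P), x ⋖ a.1 → gen (n+1) (v, v+1) (shc w (f' a))) :
    ∃ f : P → ℕ × ℕ, Rep_s14 (n+1) f := by
  classical
  let f : P → ℕ × ℕ := fun z => if hz : z = x then (v, v+1) else shc w (f' ⟨z, hz⟩)
  have fx : f x = (v, v+1) := by simp [f]
  have fq : ∀ q : ({x}ᶜ : Set P), f q.1 = shc w (f' q) := by
    intro q
    have : q.1 ≠ x := q.2
    simp [f, this]
  have cs : ∀ z, z = x ∨ ∃ q : ({x}ᶜ : Set P), z = q.1 := by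
    intro z
    by_cases hz : z = x
    · exact Or.inl hz
    · exact Or.inr ⟨⟨z, hz⟩, rfl⟩
  have key1 : ∀ p q, sh w p = sh w q ↔ p = q := by
    intro p q; unfold sh; split_ifs <;> omega
  have key2 : ∀ p q, sh w p < sh w q ↔ p < q := by
    intro p q; unfold sh; split_ifs <;> omega
  have key3 : ∀ p, p ≤ n → sh w p ≤ n + 1 := by
    intro p hp; unfold sh; split_ifs <;> omega
  have key4 : ∀ p, sh w p ≠ w := by
    intro p; unfold sh; split_ifs <;> omega
  refine ⟨f, ?_, ?_, ?_, ?_, ?_, ?_, ?_⟩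
  · intro a b hab
    rcases cs a with rfl | ⟨a, rfl⟩ <;> rcases cs b with rfl | ⟨b, rfl⟩
    · rfl
    · rw [fx, fq] at hab
      simp only [shc, Prod.mk.injEq] at hab
      have e1 := key4 (f' b).1
      have e2 := key4 (f' b).2
      omega
    · rw [fx, fq] at hab
      simp only [shc, Prod.mk.injEq] at hab
      have e1 := key4 (f' a).1
      have e2 := key4 (f' a).2
      omega
    · rw [fq, fq] at hab
      simp only [shc, Prod.mk.injEq, key1] at hab
      rw [h.inj (Prod.ext hab.1 hab.2)]
  · intro a
    rcases cs a with rfl | ⟨a, rfl⟩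
    · rw [fx]; simp
    · rw [fq]; simpa only [shc, key2] using h.lt a
  · intro a
    rcases cs a with rfl | ⟨a, rfl⟩
    · rw [fx]; simpa using hv
    · rw [fq]; exact key3 _ (h.le a)
  · intro a b
    rcases cs a with rfl | ⟨a, rfl⟩ <;> rcases cs b with rfl | ⟨b, rfl⟩
    · simp
    · rw [fx, fq]; simp only [shc]; omega
    · rw [fx, fq]; simp only [shc]; omega
    · rw [fq, fq]; simpa only [shc, key2] using h.nc a b
  · intro a
    rcases cs a with rfl | ⟨a, rfl⟩
    · rcases hw with hw | hw
      · refine ⟨{v}, by simp [fx], by simp [fx], fun b hb => ?_⟩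
        obtain ⟨b, rfl⟩ := (cs b).resolve_left hb
        have e1 := key4 (f' b).1
        have e2 := key4 (f' b).2
        rw [fq]
        simp only [shc, Set.mem_singleton_iff]
        omega
      · refine ⟨{v+1}ᶜ, by simp [fx], by simp [fx], fun b hb => ?_⟩
        obtain ⟨b, rfl⟩ := (cs b).resolve_left hb
        have e1 := key4 (f' b).1
        have e2 := key4 (f' b).2
        rw [fq]
        simp only [shc, Set.mem_singleton_iff, Set.mem_compl_iff]
        omega
    · obtain ⟨S, s1, s2, s3⟩ := h.cut a
      let t : ℕ → ℕ := fun u => if u ≤ v then u else u - 1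
      have ht : ∀ u, t (sh w u) = u := by
        intro u; simp only [t, sh]; split_ifs <;> omega
      have tv : t v = v := by simp [t]
      have tv' : t (v+1) = v := by simp [t]
      refine ⟨t ⁻¹' S, by simpa [fq, shc, ht] using s1, by simpa [fq, shc, ht] using s2,
        fun b hb => ?_⟩
      rcases cs b with rfl | ⟨b, rfl⟩
      · simp [fx, tv, tv']
      · simpa [fq, shc, ht] using s3 b (fun hc => hb (by rw [hc]))
  · intro a b
    rcases cs a with rfl | ⟨a, rfl⟩ <;> rcases cs b with rfl | ⟨b, rfl⟩
    · exact fun hh => absurd hh gen_irrefl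
    · rw [fx, fq]; exact h2 b
    · rw [fx, fq]; exact h1 a
    · rw [fq, fq, gen_shc (h.lt a) (h.le a) (h.lt b) (h.le b)]; exact h.gen_lt a b
  · intro a b
    rcases cs a with rfl | ⟨a, rfl⟩ <;> rcases cs b with rfl | ⟨b, rfl⟩
    · exact fun hh => absurd rfl hh.ne
    · rw [fx, fq]; exact h4 b
    · rw [fx, fq]; exact h3 a
    · rw [fq, fq, gen_shc (h.lt a) (h.le a) (h.lt b) (h.le b)]
      intro hab
      exact h.cov_gen a b ⟨hab.lt, fun c hac hcb => hab.2 hac hcb⟩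

section
variable {P : Type} [PartialOrder P] {n : ℕ} {f : P → ℕ × ℕ}

lemma Rep_s14.cov_up [Finite P] (h : Rep_s14 n f) {y a : P} {v : ℕ} (hy : Inc v (f y)) (ha : Inc v (f a))
    (hk : key n v (f y) < key n v (f a)) : ∃ c, Inc v (f c) ∧ y ⋖ c := by
  obtain ⟨c, ⟨hc1, hc2⟩, hc3⟩ := Set.exists_min_image
    {c : P | Inc v (f c) ∧ key n v (f y) < key n v (f c)} (fun c => key n v (f c))
    (Set.toFinite _) ⟨a, ha, hk⟩
  exact ⟨c, hc1, h.covBy hy hc1 hc2 (fun z hz hz' => hc3 z ⟨hz, hz'⟩)⟩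

lemma Rep_s14.cov_dn [Finite P] (h : Rep_s14 n f) {y a : P} {v : ℕ} (hy : Inc v (f y)) (ha : Inc v (f a))
    (hk : key n v (f a) < key n v (f y)) : ∃ c, Inc v (f c) ∧ c ⋖ y := by
  obtain ⟨c, ⟨hc1, hc2⟩, hc3⟩ := Set.exists_max_image
    {c : P | Inc v (f c) ∧ key n v (f c) < key n v (f y)} (fun c => key n v (f c))
    (Set.toFinite _) ⟨a, ha, hk⟩
  refine ⟨c, hc1, h.covBy hc1 hy hc2 (fun z hz hz' => ?_)⟩
  by_contra hc
  have := hc3 z ⟨hz, by omega⟩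
  omega
end

lemma covBy_lift {P : Type} [PartialOrder P] {x : P} (hx : (∀ a, ¬ x < a) ∨ (∀ a, ¬ a < x))
    (a b : ({x}ᶜ : Set P)) : a ⋖ b ↔ a.1 ⋖ b.1 := by
  constructor
  · intro hab
    refine ⟨hab.lt, fun c hac hcb => ?_⟩
    by_cases hc : c = x
    · subst hc
      rcases hx with hx | hx
      · exact hx _ hcb
      · exact hx _ hac
    · exact hab.2 (c := ⟨c, hc⟩) hac hcb
  · intro hab
    exact ⟨hab.lt, fun c hac hcb => hab.2 hac hcb⟩

lemma three_covers {α : Type*} [Finite α] {s : Set α} (hs : s.ncard ≤ 2) {a b c : α} (ha : a ∈ s)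
    (hb : b ∈ s) (hc : c ∈ s) (hab : a ≠ b) (hac : a ≠ c) (hbc : b ≠ c) : False := by
  have : 2 < s.ncard := (Set.two_lt_ncard_iff (Set.toFinite s)).2
    ⟨a, b, c, ha, hb, hc, hab, hac, hbc⟩
  omega

lemma exists_rep (n : ℕ) (hn : 1 ≤ n) : ∀ (P : Type) [PartialOrder P] [Fintype P],
    Fintype.card P = n →
    (∀ x : P, {y : P | y ⋖ x}.ncard ≤ 2 ∧ {y : P | x ⋖ y}.ncard ≤ 2) →
      (SimpleGraph.fromRel (fun x y : P => x ⋖ y)).IsAcyclic →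
      (SimpleGraph.fromRel (fun x y : P => x ⋖ y)).Connected → ∃ f : P → ℕ × ℕ, Rep_s14 n f := by
  induction n, hn using Nat.le_induction with
  | base =>
    intro P _ _ hcard _ _ _
    have hs : Subsingleton P := Fintype.card_le_one_iff_subsingleton.1 hcard.le
    refine ⟨fun _ => (0, 1), fun a b _ => Subsingleton.elim a b, by simp, by simp, by simp, ?_, ?_, ?_⟩
    · intro x
      exact ⟨{0}, by simp, by simp, fun b hb => absurd (Subsingleton.elim b x) hb⟩
    · intro a b hh
      exact absurd hh gen_irrefl
    · intro a b hh
      exact absurd (Subsingleton.elim a b) hh.ne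
  | succ n hn ih =>
    intro P _ _ hcard hdeg hac hconn
    classical
    have hnt : Nontrivial P := Fintype.one_lt_card_iff_nontrivial.1 (by omega)
    have htree : (SimpleGraph.fromRel (fun x y : P => x ⋖ y)).IsTree := ⟨hconn, hac⟩
    obtain ⟨x, hx⟩ := htree.exists_vert_degree_one_of_nontrivial
    have hconn' := hconn.induce_compl_singleton_of_degree_eq_one hx
    obtain ⟨y, hy, hyu⟩ := SimpleGraph.degree_eq_one_iff_existsUnique_adj.1 hx
    simp only [SimpleGraph.fromRel_adj] at hy hyu
    have huniq : ∀ z, (x ⋖ z ∨ z ⋖ x) → z = y := by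
      intro z hz
      refine hyu z ⟨?_, hz⟩
      rcases hz with hz | hz
      · exact hz.ne
      · exact hz.ne'
    obtain ⟨hxy, hy⟩ := hy
    have hcQ : Fintype.card ({x}ᶜ : Set P) = n := by
      rw [Fintype.card_compl_set, hcard]; simp
    have hext : (y ⋖ x ∧ ∀ a, ¬ x < a) ∨ (x ⋖ y ∧ ∀ a, ¬ a < x) := by
      rcases hy with hy | hy
      · refine Or.inr ⟨hy, fun a ha => ?_⟩
        rcases Relation.ReflTransGen.cases_tail (le_chain.1 ha.le) with h | ⟨c, -, h⟩
        · exact ha.ne' h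
        · have := huniq c (Or.inr h)
          subst this
          exact lt_asymm hy.lt h.lt
      · refine Or.inl ⟨hy, fun a ha => ?_⟩
        rcases Relation.ReflTransGen.cases_head (le_chain.1 ha.le) with h | ⟨c, h, -⟩
        · exact ha.ne h
        · have := huniq c (Or.inl h)
          subst this
          exact lt_asymm hy.lt h.lt
    have hlift := covBy_lift (x := x) (hext.imp And.right And.right)
    have hgraph : SimpleGraph.fromRel (fun a b : ({x}ᶜ : Set P) => a ⋖ b) =
        (SimpleGraph.fromRel (fun x y : P => x ⋖ y)).induce {x}ᶜ := by
      ext a b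
      simp [hlift, Subtype.ext_iff]
    obtain ⟨f', h⟩ := ih ({x}ᶜ : Set P) hcQ (by
      intro a
      refine ⟨le_trans ?_ (hdeg a.1).1, le_trans ?_ (hdeg a.1).2⟩
      · rw [← Set.ncard_image_of_injective _ Subtype.val_injective]
        refine Set.ncard_le_ncard ?_ (Set.toFinite _)
        rintro _ ⟨b, hb, rfl⟩
        exact (hlift _ _).1 hb
      · rw [← Set.ncard_image_of_injective _ Subtype.val_injective]
        refine Set.ncard_le_ncard ?_ (Set.toFinite _)
        rintro _ ⟨b, hb, rfl⟩
        exact (hlift _ _).1 hb) (hgraph ▸ hac.induce _) (hgraph ▸ hconn')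
    let yq : ({x}ᶜ : Set P) := ⟨y, Ne.symm hxy⟩
    have hl := h.lt yq
    have hl' := h.le yq
    rcases hext with ⟨hyx, hmax⟩ | ⟨hyx, hmin⟩
    · have htop : ∃ v, Inc v (f' yq) ∧ ∀ a, Inc v (f' a) → key n v (f' a) ≤ key n v (f' yq) := by
        by_contra! hc
        obtain ⟨a, ha, hka⟩ := hc (f' yq).1 (Or.inl rfl)
        obtain ⟨b, hb, hkb⟩ := hc (f' yq).2 (Or.inr rfl)
        obtain ⟨c, hc1, hc2⟩ := h.cov_up (Or.inl rfl) ha hka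
        obtain ⟨d, hd1, hd2⟩ := h.cov_up (Or.inr rfl) hb hkb
        refine three_covers (hdeg y).2 (a := x) (b := c.1) (c := d.1) hyx ((hlift _ _).1 hc2)
          ((hlift _ _).1 hd2) (Ne.symm c.2) (Ne.symm d.2) ?_
        intro hcd
        have hcd' : c = d := Subtype.ext hcd
        subst hcd'
        exact hc2.ne (h.eq_of_inc hl.ne (Or.inl rfl) (Or.inr rfl) hc1 hd1)
      obtain ⟨v, hv1, hv2⟩ := htop
      have hvn : v ≤ n := by simp only [Inc] at hv1; omega
      refine h.step (w := v + 1) (Or.inr rfl) hvn ?_ ?_ ?_ ?_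
      · intro a ha
        rw [gen_up1 (h.lt a) (h.le a) hvn] at ha
        have : a ≤ yq := h.le_of_key ha hv1 (hv2 a ha)
        exact lt_of_le_of_lt this hyx.lt
      · intro a ha
        exact absurd ha (gen_up2 (h.lt a) (h.le a) hvn)
      · intro a ha
        have : a = yq := Subtype.ext (huniq a.1 (Or.inr ha))
        subst this
        exact (gen_up1 (h.lt _) (h.le _) hvn).2 hv1
      · intro a ha
        exact absurd ha.lt (hmax _)
    · have htop : ∃ v, Inc v (f' yq) ∧ ∀ a, Inc v (f' a) → key n v (f' yq) ≤ key n v (f' a) := by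
        by_contra! hc
        obtain ⟨a, ha, hka⟩ := hc (f' yq).1 (Or.inl rfl)
        obtain ⟨b, hb, hkb⟩ := hc (f' yq).2 (Or.inr rfl)
        obtain ⟨c, hc1, hc2⟩ := h.cov_dn (Or.inl rfl) ha hka
        obtain ⟨d, hd1, hd2⟩ := h.cov_dn (Or.inr rfl) hb hkb
        refine three_covers (hdeg y).1 (a := x) (b := c.1) (c := d.1) hyx ((hlift _ _).1 hc2)
          ((hlift _ _).1 hd2) (Ne.symm c.2) (Ne.symm d.2) ?_
        intro hcd
        have hcd' : c = d := Subtype.ext hcd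
        subst hcd'
        exact hc2.ne' (h.eq_of_inc hl.ne (Or.inl rfl) (Or.inr rfl) hc1 hd1)
      obtain ⟨v, hv1, hv2⟩ := htop
      have hvn : v ≤ n := by simp only [Inc] at hv1; omega
      refine h.step (w := v) (Or.inl rfl) hvn ?_ ?_ ?_ ?_
      · intro a ha
        exact absurd ha (gen_dn2 (h.lt a) (h.le a) hvn)
      · intro a ha
        rw [gen_dn1 (h.lt a) (h.le a) hvn] at ha
        have : yq ≤ a := h.le_of_key hv1 ha (hv2 a ha)
        exact lt_of_lt_of_le hyx.lt this
      · intro a ha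
        exact absurd ha.lt (hmin _)
      · intro a ha
        have : a = yq := Subtype.ext (huniq a.1 (Or.inl ha))
        subst this
        exact (gen_dn1 (h.lt _) (h.le _) hvn).2 hv1

/-- Theorem 5.6: for `ε = (−,…,−)`, a finite poset `P` with `n` elements is isomorphic to
the poset `P_d` of a strand diagram with `n` strands (a noncrossing spanning tree on
`{0,…,n}`) iff every element covers and is covered by at most two elements, and the Hasse
diagram of `P` is acyclic and connected. -/
theorem poset_of_diagram_characterization (n : ℕ) (hn : 1 ≤ n)
    (P : Type) [PartialOrder P] [Fintype P] (hcard : Fintype.card P = n) :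
    (∃ d : Finset (ℕ × ℕ), d.card = n ∧ IsDiagram n (fun _ => false) d ∧
      ∃ e : P ≃ {c : ℕ × ℕ // c ∈ d},
        ∀ x y : P, x ≤ y ↔ leD (fun _ => false) d (e x).1 (e y).1) ↔
    ((∀ x : P, {y : P | y ⋖ x}.ncard ≤ 2 ∧ {y : P | x ⋖ y}.ncard ≤ 2) ∧
      (SimpleGraph.fromRel (fun x y : P => x ⋖ y)).IsAcyclic ∧
      (SimpleGraph.fromRel (fun x y : P => x ⋖ y)).Connected) := by
  constructor
  · rintro ⟨d, hd, ⟨hd1, hd2, hd3⟩, e, he⟩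
    have hlt : ∀ x : P, (e x).1.1 < (e x).1.2 := fun x => (hd1 _ (e x).2).1
    have hle : ∀ x : P, (e x).1.2 ≤ n := fun x => (hd1 _ (e x).2).2
    have hinj : Function.Injective (fun x : P => (e x).1) :=
      Subtype.val_injective.comp e.injective
    have hsur : ∀ c ∈ d, ∃ z : P, (e z).1 = c := fun c hc => ⟨e.symm ⟨c, hc⟩, by simp⟩
    have hCG : chordGraph d = CG (fun x : P => (e x).1) := by
      unfold chordGraph CG
      congr 1
      ext s
      constructor
      · rintro ⟨c, hc, rfl⟩
        obtain ⟨z, rfl⟩ := hsur c hc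
        exact ⟨z, rfl⟩
      · rintro ⟨z, rfl⟩
        exact ⟨_, (e z).2, rfl⟩
    have hgl : ∀ a b : P, gen n (e a).1 (e b).1 → a < b := by
      intro a b hg
      refine lt_of_le_of_ne ((he a b).2 (Relation.ReflTransGen.single
        ⟨(e a).2, (e b).2, (gen_iff n _ _ (hlt a) (hle a) (hlt b) (hle b)).2 hg⟩)) ?_
      rintro rfl
      exact gen_irrefl hg
    have hrep : Rep_s14 n (fun x : P => (e x).1) := by
      refine ⟨hinj, hlt, hle, ?_, (acyc_iff hinj hlt).1 (hCG ▸ hd3), hgl, ?_⟩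
      · rintro a b ⟨h1, h2, h3⟩
        exact hd2 _ (e a).2 _ (e b).2 (Or.inl ⟨h1, h2, h3, rfl⟩)
      · intro a b hab
        rcases Relation.ReflTransGen.cases_head ((he a b).1 hab.le) with h | ⟨c, h, h'⟩
        · exact absurd (hinj h) hab.ne
        · obtain ⟨hm1, hm2, hm⟩ := h
          obtain ⟨z, rfl⟩ := hsur c hm2
          have hg := (gen_iff n _ _ (hlt a) (hle a) (hlt z) (hle z)).1 hm
          have hzb : z ≤ b := (he z b).2 h'
          rcases hzb.lt_or_eq with hh | rfl
          · exact absurd hh (hab.2 (hgl _ _ hg))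
          · exact hg
    exact ⟨fun x => ⟨hrep.down_le x, hrep.up_le x⟩, hrep.hasse_acyclic,
      hrep.hasse_connected hn hcard⟩
  · rintro ⟨h1, h2, h3⟩
    classical
    obtain ⟨f, h⟩ := exists_rep n hn P hcard h1 h2 h3
    have hmem : ∀ x, f x ∈ Finset.univ.image f := fun x => by simp
    refine ⟨Finset.univ.image f, ?_, ⟨?_, ?_, ?_⟩,
      Equiv.ofBijective (fun x => ⟨f x, hmem x⟩) ⟨?_, ?_⟩, ?_⟩
    · rw [Finset.card_image_of_injective _ h.inj, Finset.card_univ, hcard]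
    · intro c hc
      obtain ⟨x, -, rfl⟩ := Finset.mem_image.1 hc
      exact ⟨h.lt x, h.le x⟩
    · intro c hc c' hc'
      obtain ⟨x, -, rfl⟩ := Finset.mem_image.1 hc
      obtain ⟨y, -, rfl⟩ := Finset.mem_image.1 hc'
      rintro (hh | hh | hh | hh)
      · exact h.nc x y ⟨hh.1, hh.2.1, hh.2.2.1⟩
      · exact h.nc y x ⟨hh.1, hh.2.1, hh.2.2.1⟩
      · exact hh.2.2.2 rfl
      · exact hh.2.2.2 rfl
    · have hCG : chordGraph (Finset.univ.image f) = CG f := by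
        unfold chordGraph CG
        congr 1
        ext s
        simp
      rw [hCG]
      exact (acyc_iff h.inj h.lt).2 h.cut
    · intro a b hab
      exact h.inj (congrArg Subtype.val hab)
    · rintro ⟨c, hc⟩
      obtain ⟨x, -, rfl⟩ := Finset.mem_image.1 hc
      exact ⟨x, rfl⟩
    · intro x y
      change x ≤ y ↔ leD (fun _ => false) (Finset.univ.image f) (f x) (f y)
      constructor
      · intro hxy
        refine Relation.ReflTransGen.lift f ?_ _ _ (le_chain.1 hxy)
        intro a b hab
        exact ⟨hmem a, hmem b, (gen_iff n _ _ (h.lt a) (h.le a) (h.lt b) (h.le b)).2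
          (h.cov_gen a b hab)⟩
      · intro hxy
        have main : ∀ c, leD (fun _ => false) (Finset.univ.image f) (f x) c →
            ∀ z, f z = c → x ≤ z := by
          intro c hc
          induction hc with
          | refl => intro z hz; exact (h.inj hz).ge
          | tail _ hst ih =>
            rintro z rfl
            obtain ⟨hm1, hm2, hm⟩ := hst
            obtain ⟨a, -, rfl⟩ := Finset.mem_image.1 hm1
            exact (ih a rfl).trans (h.gen_lt a z
              ((gen_iff n _ _ (h.lt a) (h.le a) (h.lt z) (h.le z)).1 hm)).le
        exact main _ hxy y rfl

end ESPaper
end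

section
/- Let n ≥ 1, ε = (−,…,−), and let d be a strand diagram on {0,…,n}. Let τd = { { a−1 mod (n+1), b−1 mod (n+1) } : {a,b} ∈ d } and τ⁻¹d = { { a+1 mod (n+1), b+1 mod (n+1) } : {a,b} ∈ d }. Then τd and τ⁻¹d are again strand diagrams, and there are isomorphisms of posets P_d ≅ P_{τd} and P_d ≅ P_{τ⁻¹d}. -/
namespace ESPaper

/-- Rotation `τ` of a chord: subtract 1 from both endpoints mod `n+1`, renormalized. -/
def rotDown (n : ℕ) (c : ℕ × ℕ) : ℕ × ℕ :=
  (min ((c.1 + n) % (n + 1)) ((c.2 + n) % (n + 1)),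
    max ((c.1 + n) % (n + 1)) ((c.2 + n) % (n + 1)))

/-- Rotation `τ⁻¹` of a chord: add 1 to both endpoints mod `n+1`, renormalized. -/
def rotUp (n : ℕ) (c : ℕ × ℕ) : ℕ × ℕ :=
  (min ((c.1 + 1) % (n + 1)) ((c.2 + 1) % (n + 1)),
    max ((c.1 + 1) % (n + 1)) ((c.2 + 1) % (n + 1)))

def Vd (n : ℕ) (c : ℕ × ℕ) : Prop := c.1 < c.2 ∧ c.2 ≤ n

theorem generic (n : ℕ) (d : Finset (ℕ × ℕ)) (f : ℕ × ℕ → ℕ × ℕ) (h : ℕ → ℕ)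
    (hh : Function.Injective h)
    (hv : ∀ c, Vd n c → Vd n (f c))
    (hc : ∀ c c', Vd n c → Vd n c' →
      Crosses (fun _ => false) (f c) (f c') → Crosses (fun _ => false) c c')
    (hs : ∀ c c', Vd n c → Vd n c' →
      ((SharesEndpoint c c' ∧ Cw (fun _ => false) c' c) ↔
        (SharesEndpoint (f c) (f c') ∧ Cw (fun _ => false) (f c') (f c))))
    (hi : ∀ c c', Vd n c → Vd n c' → f c = f c' → c = c')
    (he : ∀ c, Vd n c → s(h (f c).1, h (f c).2) = s(c.1, c.2))
    (hd : IsDiagram n (fun _ => false) d) :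
    (IsDiagram n (fun _ => false) (d.image f) ∧
      ∃ e : {c : ℕ × ℕ // c ∈ d} ≃ {c : ℕ × ℕ // c ∈ d.image f},
        ∀ x y : {c : ℕ × ℕ // c ∈ d},
          leD (fun _ => false) d x.1 y.1 ↔
            leD (fun _ => false) (d.image f) (e x).1 (e y).1) := by
  obtain ⟨h1, h2, h3⟩ := hd
  refine ⟨⟨?_, ?_, ?_⟩, ?_⟩
  · intro c hcd
    obtain ⟨a, ha, rfl⟩ := Finset.mem_image.1 hcd
    exact hv a (h1 a ha)
  · intro c hcd c' hcd'
    obtain ⟨a, ha, rfl⟩ := Finset.mem_image.1 hcd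
    obtain ⟨b, hb, rfl⟩ := Finset.mem_image.1 hcd'
    exact fun hx => h2 a ha b hb (hc a b (h1 a ha) (h1 b hb) hx)
  · let φ : chordGraph (d.image f) →g chordGraph d :=
      { toFun := h
        map_rel' := by
          intro a b hab
          simp only [chordGraph, SimpleGraph.fromEdgeSet_adj, Set.mem_ofPred_eq] at hab ⊢
          obtain ⟨⟨c, hcd, hce⟩, hne⟩ := hab
          obtain ⟨a', ha, rfl⟩ := Finset.mem_image.1 hcd
          refine ⟨⟨a', ha, ?_⟩, fun hx => hne (hh hx)⟩
          rw [← he a' (h1 a' ha)]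
          have := congrArg (Sym2.map h) hce
          simpa using this }
    exact h3.comap φ hh
  · have inj : Set.InjOn f (d : Set (ℕ × ℕ)) := fun a ha b hb hab =>
      hi a b (h1 a ha) (h1 b hb) hab
    let e0 : {c : ℕ × ℕ // c ∈ d} → {c : ℕ × ℕ // c ∈ d.image f} :=
      fun x => ⟨f x.1, Finset.mem_image_of_mem f x.2⟩
    have hb : Function.Bijective e0 := by
      constructor
      · intro x y hxy
        exact Subtype.ext (inj x.2 y.2 (congrArg Subtype.val hxy))
      · rintro ⟨c, hcd⟩
        obtain ⟨a, ha, rfl⟩ := Finset.mem_image.1 hcd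
        exact ⟨⟨a, ha⟩, rfl⟩
    refine ⟨Equiv.ofBijective e0 hb, fun x y => ?_⟩
    change leD _ d x.1 y.1 ↔ leD _ (d.image f) (f x.1) (f y.1)
    constructor
    · intro hxy
      refine Relation.ReflTransGen.lift f ?_ _ _ hxy
      rintro a b ⟨ha, hb, hr⟩
      exact ⟨Finset.mem_image_of_mem f ha, Finset.mem_image_of_mem f hb,
        (hs a b (h1 a ha) (h1 b hb)).1 hr⟩
    · have key : ∀ u v, leD (fun _ => false) (d.image f) u v →
          ∀ a ∈ d, f a = u → ∀ b ∈ d, f b = v → leD (fun _ => false) d a b := by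
        intro u v huv
        induction huv with
        | refl =>
          intro a ha hau b hb hbu
          rw [inj ha hb (hau.trans hbu.symm)]
          exact Relation.ReflTransGen.refl
        | tail _ hst ih =>
          intro a ha hau b hb hbu
          obtain ⟨m1, m2, hr⟩ := hst
          obtain ⟨w, hw, rfl⟩ := Finset.mem_image.1 m1
          subst hbu
          exact Relation.ReflTransGen.tail (ih a ha hau w hw rfl)
            ⟨hw, hb, (hs w b (h1 w hw) (h1 b hb)).2 hr⟩
      exact fun hxy => key _ _ hxy x.1 x.2 rfl y.1 y.2 rfl

theorem down_eq (n a b : ℕ) (h : Vd n (a, b)) :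
    rotDown n (a, b) = if a = 0 then (b - 1, n) else (a - 1, b - 1) := by
  obtain ⟨h1, h2⟩ := h
  simp only at h1 h2
  have e : ∀ v, v ≤ n → v ≠ 0 → (v + n) % (n + 1) = v - 1 := by
    intro v hv h0
    rw [show v + n = (v - 1) + (n + 1) by omega, Nat.add_mod_right, Nat.mod_eq_of_lt (by omega)]
  simp only [rotDown, e b h2 (by omega)]
  split_ifs with h0
  · subst h0
    rw [Nat.zero_add, Nat.mod_eq_of_lt (by omega)]
    ext <;> simp <;> omega
  · rw [e a (by omega) h0]
    ext <;> simp <;> omega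

theorem up_eq (n a b : ℕ) (h : Vd n (a, b)) :
    rotUp n (a, b) = if b = n then (0, a + 1) else (a + 1, b + 1) := by
  obtain ⟨h1, h2⟩ := h
  simp only at h1 h2
  simp only [rotUp, Nat.mod_eq_of_lt (show a + 1 < n + 1 by omega)]
  split_ifs with h0
  · subst h0
    simp
  · rw [Nat.mod_eq_of_lt (show b + 1 < n + 1 by omega)]
    ext <;> simp <;> omega

/-- Lemma 5.5: for `ε = (−,…,−)`, the rotations `τd` and `τ⁻¹d` of a strand diagram `d`
are strand diagrams, and `P_d ≅ P_{τd}` and `P_d ≅ P_{τ⁻¹d}` as posets. -/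
theorem rotation_invariance (n : ℕ) (hn : 1 ≤ n) (d : Finset (ℕ × ℕ))
    (hd : IsDiagram n (fun _ => false) d) :
    (IsDiagram n (fun _ => false) (d.image (rotDown n)) ∧
      ∃ e : {c : ℕ × ℕ // c ∈ d} ≃ {c : ℕ × ℕ // c ∈ d.image (rotDown n)},
        ∀ x y : {c : ℕ × ℕ // c ∈ d},
          leD (fun _ => false) d x.1 y.1 ↔
            leD (fun _ => false) (d.image (rotDown n)) (e x).1 (e y).1) ∧
    (IsDiagram n (fun _ => false) (d.image (rotUp n)) ∧
      ∃ e : {c : ℕ × ℕ // c ∈ d} ≃ {c : ℕ × ℕ // c ∈ d.image (rotUp n)},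
        ∀ x y : {c : ℕ × ℕ // c ∈ d},
          leD (fun _ => false) d x.1 y.1 ↔
            leD (fun _ => false) (d.image (rotUp n)) (e x).1 (e y).1) := by
  constructor
  · refine generic n d (rotDown n) (fun v => if v < n then v + 1 else if v = n then 0 else v)
      ?_ ?_ ?_ ?_ ?_ ?_ hd
    · intro a b hab
      simp only at hab
      split_ifs at hab <;> omega
    · rintro ⟨a, b⟩ h
      rw [down_eq n a b h]
      simp only [Vd] at h
      split_ifs <;> simp only [Vd] <;> omega
    · rintro ⟨a, b⟩ ⟨a', b'⟩ h h'
      rw [down_eq n a b h, down_eq n a' b' h']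
      simp only [Vd] at h h'
      split_ifs <;> simp [Crosses] <;> omega
    · rintro ⟨a, b⟩ ⟨a', b'⟩ h h'
      rw [down_eq n a b h, down_eq n a' b' h']
      simp only [Vd] at h h'
      split_ifs <;> simp [SharesEndpoint, Cw] <;> omega
    · rintro ⟨a, b⟩ ⟨a', b'⟩ h h'
      rw [down_eq n a b h, down_eq n a' b' h']
      simp only [Vd] at h h'
      split_ifs <;> simp only [Prod.mk.injEq] <;> omega
    · rintro ⟨a, b⟩ h
      rw [down_eq n a b h]
      simp only [Vd] at h
      rw [Sym2.eq_iff]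
      by_cases h0 : a = 0
      · rw [if_pos h0]
        dsimp only
        split_ifs <;> omega
      · rw [if_neg h0]
        dsimp only
        split_ifs <;> omega
  · refine generic n d (rotUp n) (fun v => if v = 0 then n else if v ≤ n then v - 1 else v)
      ?_ ?_ ?_ ?_ ?_ ?_ hd
    · intro a b hab
      simp only at hab
      split_ifs at hab <;> omega
    · rintro ⟨a, b⟩ h
      rw [up_eq n a b h]
      simp only [Vd] at h
      split_ifs <;> simp only [Vd] <;> omega
    · rintro ⟨a, b⟩ ⟨a', b'⟩ h h'
      rw [up_eq n a b h, up_eq n a' b' h']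
      simp only [Vd] at h h'
      split_ifs <;> simp [Crosses] <;> omega
    · rintro ⟨a, b⟩ ⟨a', b'⟩ h h'
      rw [up_eq n a b h, up_eq n a' b' h']
      simp only [Vd] at h h'
      split_ifs <;> simp [SharesEndpoint, Cw] <;> omega
    · rintro ⟨a, b⟩ ⟨a', b'⟩ h h'
      rw [up_eq n a b h, up_eq n a' b' h']
      simp only [Vd] at h h'
      split_ifs <;> simp only [Prod.mk.injEq] <;> omega
    · rintro ⟨a, b⟩ h
      rw [up_eq n a b h]
      simp only [Vd] at h
      rw [Sym2.eq_iff]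
      by_cases h0 : b = n
      · rw [if_pos h0]
        have h1 : a + 1 ≤ n := by omega
        simp [h1]
        omega
      · rw [if_neg h0]
        have h1 : a + 1 ≤ n := by omega
        have h2 : b + 1 ≤ n := by omega
        simp [h1, h2]

end ESPaper
end
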